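/- arXiv:1905.08445 — 2 statements merged into one kernel-verified Lean document; each statement's English description precedes it below -/
import Mathlib

section
/- Under Assumption H1 and the Bregman setting, if 0 < ε < m/L, then for every x ∈ ℝ^n the set T(x) of global minimizers of y ↦ ⟨∇f(x), y − x⟩ + g(y) + D(x,y)/ε is nonempty and compact. -/
open Set Metric Filter Topology
open scoped RealInnerProductSpace

noncomputable section

variable {E : Type*} [NormedAddCommGroup E] [InnerProductSpace ℝ E] [FiniteDimensional ℝ E]

/-- The Bregman distance generated by `K` (with gradient `K'`). -/
def bregD (K : E → ℝ) (K' : E → E) (x y : E) : ℝ := K y - K x - ⟪K' x, y - x⟫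

/-- The Bregman proximal mapping: the set of global minimizers of
`y ↦ ⟪∇f x, y - x⟫ + g y + D(x,y)/ε`. -/
def bregT (f' : E → E) (g : E → ℝ) (K : E → ℝ) (K' : E → E) (ε : ℝ) (x : E) : Set E :=
  {y | ∀ z, ⟪f' x, y - x⟫ + g y + bregD K K' x y / ε ≤ ⟪f' x, z - x⟫ + g z + bregD K K' x z / ε}

/-- The Bregman proximal envelope. -/
def bregEnv (f : E → ℝ) (f' : E → E) (g : E → ℝ) (K : E → ℝ) (K' : E → E) (ε : ℝ) (x : E) : ℝ :=
  ⨅ y : E, (f x + ⟪f' x, y - x⟫ + g y + bregD K K' x y / ε)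

theorem descent_aux (f : E → ℝ) (f' : E → E) (L : ℝ)
    (hf : ∀ x, HasGradientAt f (f' x) x)
    (hlip : ∀ x y, ‖f' x - f' y‖ ≤ L * ‖x - y‖) (x y : E) :
    f y ≤ f x + ⟪f' x, y - x⟫ + L / 2 * ‖y - x‖ ^ 2 := by
  set v := y - x with hv
  have hd : ∀ t : ℝ, HasDerivAt
      (fun t : ℝ => f (x + t • v) - t * ⟪f' x, v⟫ - L / 2 * ‖v‖ ^ 2 * t ^ 2)
      (⟪f' (x + t • v), v⟫ - ⟪f' x, v⟫ - L * ‖v‖ ^ 2 * t) t := by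
    intro t
    have h1 : HasDerivAt (fun t : ℝ => x + t • v) v t := by
      simpa using ((hasDerivAt_id t).smul_const v).const_add x
    have h2 : HasDerivAt (fun t : ℝ => f (x + t • v)) ⟪f' (x + t • v), v⟫ t := by
      have h := (hf (x + t • v)).hasFDerivAt.comp_hasDerivAt t h1
      have e : (InnerProductSpace.toDual ℝ E) (f' (x + t • v)) v = ⟪f' (x + t • v), v⟫ := by simp
      rw [← e]
      exact h
    have h3 : HasDerivAt (fun t : ℝ => t * ⟪f' x, v⟫) ⟪f' x, v⟫ t := by
      simpa using (hasDerivAt_id t).mul_const ⟪f' x, v⟫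
    have h4 : HasDerivAt (fun t : ℝ => L / 2 * ‖v‖ ^ 2 * t ^ 2) (L * ‖v‖ ^ 2 * t) t := by
      have h := (hasDerivAt_pow 2 t).const_mul (L / 2 * ‖v‖ ^ 2)
      have e : L / 2 * ‖v‖ ^ 2 * (((2 : ℕ) : ℝ) * t ^ (2 - 1)) = L * ‖v‖ ^ 2 * t := by
        norm_num
        ring
      rw [← e]
      exact h
    exact (h2.sub h3).sub h4
  have hanti : AntitoneOn
      (fun t : ℝ => f (x + t • v) - t * ⟪f' x, v⟫ - L / 2 * ‖v‖ ^ 2 * t ^ 2) (Icc 0 1) := by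
    refine antitoneOn_of_hasDerivWithinAt_nonpos (convex_Icc 0 1)
      (fun t _ => (hd t).continuousAt.continuousWithinAt)
      (fun t _ => (hd t).hasDerivWithinAt) ?_
    intro t ht
    rw [interior_Icc] at ht
    have h1 : ⟪f' (x + t • v), v⟫ - ⟪f' x, v⟫ ≤ ‖f' (x + t • v) - f' x‖ * ‖v‖ := by
      rw [← inner_sub_left]
      exact real_inner_le_norm _ _
    have h2 := hlip (x + t • v) x
    rw [add_sub_cancel_left, norm_smul, Real.norm_eq_abs, abs_of_pos ht.1] at h2
    have h3 := mul_le_mul_of_nonneg_right h2 (norm_nonneg v)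
    nlinarith
  have h := hanti (left_mem_Icc.2 zero_le_one) (right_mem_Icc.2 zero_le_one) zero_le_one
  have hxv : x + v = y := by simp [hv]
  simp [hxv] at h
  linarith

/-- If `0 < ε < m/L` then for every `x` the set `T(x)` of global minimizers is nonempty
and compact. -/
theorem stmt2
    (f g : E → ℝ) (f' : E → E) (L : ℝ)
    (hL : 0 < L)
    (hf : ∀ x, HasGradientAt f (f' x) x)
    (hlip : ∀ x y, ‖f' x - f' y‖ ≤ L * ‖x - y‖)
    (hg : Continuous g)
    (hlevel : ∀ r : ℝ, Bornology.IsBounded {x : E | f x + g x ≤ r})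
    (K : E → ℝ) (K' : E → E) (m M : ℝ)
    (hm : 0 < m) (hmM : m ≤ M)
    (hK : ∀ x, HasGradientAt K (K' x) x)
    (hKstrong : ∀ x y : E, K x + ⟪K' x, y - x⟫ + m / 2 * ‖y - x‖ ^ 2 ≤ K y)
    (hKlip : ∀ x y, ‖K' x - K' y‖ ≤ M * ‖x - y‖)
    (ε : ℝ) (hε : 0 < ε)
    (hεL : ε * L < m) :
    ∀ x : E, (bregT f' g K K' ε x).Nonempty ∧ IsCompact (bregT f' g K K' ε x) := by
  intro x
  set φ : E → ℝ := fun y => ⟪f' x, y - x⟫ + g y + bregD K K' x y / ε with hφ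
  have hKc : Continuous K := continuous_iff_continuousAt.2 fun z => (hK z).continuousAt
  have hφc : Continuous φ := by
    simp only [hφ, bregD]
    fun_prop
  have hlow : ∀ y, f y + g y - f x ≤ φ y := by
    intro y
    have h1 := descent_aux f f' L hf hlip x y
    have h2 : L / 2 * ‖y - x‖ ^ 2 ≤ bregD K K' x y / ε := by
      rw [le_div_iff₀ hε]
      have := hKstrong x y
      have h3 := mul_le_mul_of_nonneg_right hεL.le (sq_nonneg ‖y - x‖)
      unfold bregD
      nlinarith
    simp only [hφ]
    linarith
  have hcomp : ∀ r, IsCompact {y | φ y ≤ r} := by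
    intro r
    have : ProperSpace E := FiniteDimensional.proper ℝ E
    refine Metric.isCompact_of_isClosed_isBounded (isClosed_le hφc continuous_const) ?_
    refine (hlevel (r + f x)).subset ?_
    intro y hy
    have := hlow y
    simp only [mem_ofPred_eq] at hy ⊢
    linarith
  obtain ⟨y, hy, hmin⟩ := (hcomp (φ x)).exists_isMinOn ⟨x, by simp⟩ hφc.continuousOn
  have hglob : ∀ z, φ y ≤ φ z := by
    intro z
    by_cases hz : φ z ≤ φ x
    · exact hmin hz
    · exact le_trans hy (le_of_not_ge hz)
  refine ⟨⟨y, hglob⟩, ?_⟩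
  have : bregT f' g K K' ε x = {z | φ z ≤ φ y} := by
    ext z
    exact ⟨fun h => h y, fun h w => le_trans h (hglob w)⟩
  rw [this]
  exact hcomp _
end
end

section
/- Necessity of the strong level-set subdifferential error bound: under Assumption H1 and the Bregman setting, suppose g is semiconvex with modulus ρ ≥ 0, 0 < ε, ε·L < m and ε·ρ < m, and let t(x) denote the unique element of T(x). Let x̄ ∈ ℝ^n, F̄ = F(x̄), ν > 0, and suppose there is β ∈ (0,1) such that infDist(t(x), [F ≤ F̄]) ≤ β · infDist(x, [F ≤ F̄]) for all x with F̄ < F(x) < F̄ + ν. Then for every x with F̄ < F(x) < F̄ + ν and every ν' ∈ ∂_P g(x): infDist(x, [F ≤ F̄]) ≤ (ε/((1 − β)(m − ερ))) · ‖∇f(x) + ν'‖. -/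
open Set Metric Filter Topology
open scoped RealInnerProductSpace

noncomputable section

variable {E : Type*} [NormedAddCommGroup E] [InnerProductSpace ℝ E] [FiniteDimensional ℝ E]

/-- The proximal subdifferential of `ψ` at `x`. -/
def proxSubdiff (ψ : E → ℝ) (x : E) : Set E :=
  {ξ | ∃ ρ > (0:ℝ), ∃ η > (0:ℝ), ∀ y, ‖y - x‖ < η →
    ψ y ≥ ψ x + ⟪ξ, y - x⟫ - ρ * ‖y - x‖ ^ 2}

lemma aux_lim (A B δ : ℝ) (hδ : 0 < δ) (h : ∀ s, 0 < s → s < δ → A ≤ s * B) : A ≤ 0 := by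
  have h1 : Tendsto (fun s : ℝ => s * B) (𝓝[>] 0) (𝓝 0) := by
    have : Tendsto (fun s : ℝ => s * B) (𝓝 0) (𝓝 (0 * B)) :=
      (continuous_id.mul continuous_const).tendsto 0
    rw [zero_mul] at this
    exact this.mono_left nhdsWithin_le_nhds
  refine ge_of_tendsto h1 ?_
  filter_upwards [Ioo_mem_nhdsGT hδ] with s hs
  exact h s hs.1 hs.2

lemma aux_semi (g : E → ℝ) (ρ : ℝ)
    (hsemi : ConvexOn ℝ Set.univ (fun y : E => g y + ρ / 2 * ‖y‖ ^ 2))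
    (a d : E) (s : ℝ) (hs0 : 0 < s) (hs1 : s < 1) :
    g (a + s • d) ≤ (1 - s) * g a + s * g (a + d) + ρ / 2 * (s * (1 - s) * ‖d‖ ^ 2) := by
  have h := hsemi.2 (mem_univ a) (mem_univ (a + d)) (by linarith : 0 ≤ 1 - s) hs0.le (by ring)
  have e : (1 - s) • a + s • (a + d) = a + s • d := by module
  rw [e] at h
  have n1 : ‖a + s • d‖ ^ 2 = ‖a‖ ^ 2 + 2 * (s * ⟪a, d⟫) + s ^ 2 * ‖d‖ ^ 2 := by
    rw [norm_add_sq_real, inner_smul_right, norm_smul, mul_pow, Real.norm_eq_abs, sq_abs]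
  have n2 := norm_add_sq_real a d
  simp only [smul_eq_mul] at h
  rw [n1, n2] at h
  linarith

lemma aux_K (K : E → ℝ) (K' : E → E) (m : ℝ)
    (hKstrong : ∀ x y : E, K x + ⟪K' x, y - x⟫ + m / 2 * ‖y - x‖ ^ 2 ≤ K y)
    (a d : E) (s : ℝ) (hs0 : 0 < s) (hs1 : s < 1) :
    K (a + s • d) ≤ (1 - s) * K a + s * K (a + d) - m / 2 * (s * (1 - s) * ‖d‖ ^ 2) := by
  have h1 := hKstrong (a + s • d) a
  have h2 := hKstrong (a + s • d) (a + d)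
  have e1 : a - (a + s • d) = (-s) • d := by module
  have e2 : a + d - (a + s • d) = (1 - s) • d := by module
  rw [e1, inner_smul_right, norm_smul, mul_pow, Real.norm_eq_abs, sq_abs] at h1
  rw [e2, inner_smul_right, norm_smul, mul_pow, Real.norm_eq_abs, sq_abs] at h2
  have h3 := mul_le_mul_of_nonneg_left h1 (by linarith : 0 ≤ 1 - s)
  have h4 := mul_le_mul_of_nonneg_left h2 hs0.le
  linarith

/-- Necessity of the strong level-set subdifferential error bound: linear decrease of
the level-set distance along the Bregman proximal mapping implies the error bound. -/
theorem stmt16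
    (f g : E → ℝ) (f' : E → E) (L : ℝ)
    (hL : 0 < L)
    (hf : ∀ x, HasGradientAt f (f' x) x)
    (hlip : ∀ x y, ‖f' x - f' y‖ ≤ L * ‖x - y‖)
    (hg : Continuous g)
    (hlevel : ∀ r : ℝ, Bornology.IsBounded {x : E | f x + g x ≤ r})
    (K : E → ℝ) (K' : E → E) (m M : ℝ)
    (hm : 0 < m) (hmM : m ≤ M)
    (hK : ∀ x, HasGradientAt K (K' x) x)
    (hKstrong : ∀ x y : E, K x + ⟪K' x, y - x⟫ + m / 2 * ‖y - x‖ ^ 2 ≤ K y)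
    (hKlip : ∀ x y, ‖K' x - K' y‖ ≤ M * ‖x - y‖)
    (ε : ℝ) (hε : 0 < ε)
    (ρ : ℝ) (hρ : 0 ≤ ρ)
    (hsemi : ConvexOn ℝ Set.univ (fun y : E => g y + ρ / 2 * ‖y‖ ^ 2))
    (hεL : ε * L < m) (hερ : ε * ρ < m)
    (t : E → E) (ht : ∀ x, bregT f' g K K' ε x = {t x})
    (xbar : E) (ν β : ℝ) (hν : 0 < ν) (hβ0 : 0 < β) (hβ1 : β < 1)
    (hlin : ∀ y : E, f xbar + g xbar < f y + g y → f y + g y < f xbar + g xbar + ν →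
      Metric.infDist (t y) {z : E | f z + g z ≤ f xbar + g xbar} ≤
        β * Metric.infDist y {z : E | f z + g z ≤ f xbar + g xbar}) :
    ∀ y : E, f xbar + g xbar < f y + g y → f y + g y < f xbar + g xbar + ν →
      ∀ ν' ∈ proxSubdiff g y,
        Metric.infDist y {z : E | f z + g z ≤ f xbar + g xbar} ≤
          ε / ((1 - β) * (m - ε * ρ)) * ‖f' y + ν'‖ := by
  intro x hx1 hx2 ν' hν'
  obtain ⟨p, hp⟩ : ∃ p, p = t x := ⟨_, rfl⟩
  have hmin : p ∈ bregT f' g K K' ε x := by rw [ht x, hp]; rfl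
  obtain ⟨d, hd⟩ : ∃ d, d = p - x := ⟨_, rfl⟩
  have hpx : p = x + d := by rw [hd]; abel
  have hc : 0 < m - ε * ρ := by linarith
  -- global subgradient inequality
  have hsub : g x + ⟪ν', d⟫ - ρ / 2 * ‖d‖ ^ 2 ≤ g p := by
    obtain ⟨r, hr, η, hη, hsg⟩ := hν'
    have key := aux_lim (g x + ⟪ν', d⟫ - ρ / 2 * ‖d‖ ^ 2 - g p) ((r - ρ / 2) * ‖d‖ ^ 2)
      (min 1 (η / (‖d‖ + 1))) (by positivity) ?_
    · linarith
    intro s hs0 hs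
    have hs1 : s < 1 := lt_of_lt_of_le hs (min_le_left _ _)
    have hs2 : s < η / (‖d‖ + 1) := lt_of_lt_of_le hs (min_le_right _ _)
    rw [lt_div_iff₀ (by positivity)] at hs2
    have h1 := aux_semi g ρ hsemi x d s hs0 hs1
    have e : x + s • d - x = s • d := by abel
    have h2 := hsg (x + s • d) (by
      rw [e, norm_smul, Real.norm_eq_abs, abs_of_pos hs0]; linarith)
    rw [e, inner_smul_right, norm_smul, mul_pow, Real.norm_eq_abs, sq_abs] at h2
    rw [← hpx] at h1
    refine le_of_mul_le_mul_left ?_ hs0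
    linarith
  -- strong growth at the minimizer
  have hgrow : ε * ⟪f' x, d⟫ + ε * g p + (K p - K x - ⟪K' x, d⟫)
      + (m - ε * ρ) / 2 * ‖d‖ ^ 2 ≤ ε * g x := by
    have key := aux_lim (ε * ⟪f' x, d⟫ + ε * g p + (K p - K x - ⟪K' x, d⟫)
      + (m - ε * ρ) / 2 * ‖d‖ ^ 2 - ε * g x) ((m - ε * ρ) / 2 * ‖d‖ ^ 2) 1 one_pos ?_
    · linarith
    intro s hs0 hs1
    have h1 := aux_semi g ρ hsemi p (-d) s hs0 hs1
    have h2 := aux_K K K' m hKstrong p (-d) s hs0 hs1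
    have e : p + -d = x := by rw [hpx]; abel
    rw [e, norm_neg] at h1 h2
    have h3 := hmin (p + s • (-d))
    have e2 : p + s • (-d) - x = (1 - s) • d := by rw [hpx]; module
    unfold bregD at h3
    rw [e2, ← hd, inner_smul_right, inner_smul_right] at h3
    have h4 := mul_le_mul_of_nonneg_left h3 hε.le
    rw [mul_add, mul_add, mul_div_cancel₀ _ hε.ne', mul_add, mul_add,
      mul_div_cancel₀ _ hε.ne'] at h4
    have h5 := mul_le_mul_of_nonneg_left h1 hε.le
    refine le_of_mul_le_mul_left ?_ hs0
    linarith
  have hK1 := hKstrong x p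
  rw [← hd] at hK1
  have hfin : (m - ε * ρ) * ‖d‖ ^ 2 ≤ ε * ‖f' x + ν'‖ * ‖d‖ := by
    have h1 := mul_le_mul_of_nonneg_left hsub hε.le
    have h2 : -⟪f' x + ν', d⟫ ≤ ‖f' x + ν'‖ * ‖d‖ :=
      (neg_le_abs _).trans (abs_real_inner_le_norm _ _)
    have h3 := mul_le_mul_of_nonneg_left h2 hε.le
    rw [inner_add_left] at h3
    linarith
  have hd' : (m - ε * ρ) * ‖d‖ ≤ ε * ‖f' x + ν'‖ := by
    rcases (norm_nonneg d).eq_or_lt with h | h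
    · rw [← h, mul_zero]; positivity
    · refine le_of_mul_le_mul_right ?_ h
      linarith
  have hl := hlin x hx1 hx2
  rw [← hp] at hl
  have htri := Metric.infDist_le_infDist_add_dist (s := {z : E | f z + g z ≤ f xbar + g xbar})
    (x := x) (y := p)
  rw [dist_comm, dist_eq_norm, ← hd] at htri
  have hb : 0 < 1 - β := by linarith
  rw [div_mul_eq_mul_div, le_div_iff₀ (by positivity)]
  have h6 := mul_le_mul_of_nonneg_left (htri.trans (add_le_add_left hl _)) hc.le
  linarith
end
end
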